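/- arXiv:1503.08845 — 2 statements merged into one kernel-verified Lean document; each statement's English description precedes it below -/
import Mathlib

section
/- At every point of Ω the following expansions in the frame {∂1 y0, ∂2 y0, b0} hold, with coefficients given by the Christoffel symbols of G: for i, j ∈ {1,2}, ∂i∂j y0 = Γ¹_{ij} ∂1 y0 + Γ²_{ij} ∂2 y0 + Γ³_{ij} b0; for i ∈ {1,2}, ∂i b0 = Γ¹_{i3} ∂1 y0 + Γ²_{i3} ∂2 y0 + Γ³_{i3} b0; and d0 = Γ¹_{33} ∂1 y0 + Γ²_{33} ∂2 y0 + Γ³_{33} b0. -/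
noncomputable section

open scoped Topology ENNReal
open Filter MeasureTheory

/-- Points of the midplate `Ω ⊆ ℝ²`. -/
abbrev E2 : Type := Fin 2 → ℝ
/-- Vectors in `ℝ³`. -/
abbrev V3 : Type := Fin 3 → ℝ
/-- `3×3` real arrays. -/
abbrev M3 : Type := Fin 3 → Fin 3 → ℝ
/-- `2×2` real arrays. -/
abbrev M2 : Type := Fin 2 → Fin 2 → ℝ

/-- Partial derivative `∂ᵢ` of a scalar field on `ℝ²`. -/
def pd2 (i : Fin 2) (f : E2 → ℝ) (x : E2) : ℝ := fderiv ℝ f x (Pi.single i 1)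

/-- Partial derivative `∂ᵢ` of an `ℝ³`-valued field on `ℝ²`. -/
def pdv (i : Fin 2) (f : E2 → V3) (x : E2) : V3 := fderiv ℝ f x (Pi.single i 1)

/-- Euclidean inner product on `ℝ³`. -/
def dot3 (u v : V3) : ℝ := ∑ k, u k * v k

/-- Matrix product of `3×3` arrays. -/
def mmul (A B : M3) : M3 := fun i j => ∑ k, A i k * B k j

/-- Transpose of a `3×3` array. -/
def transp (A : M3) : M3 := fun i j => A j i

/-- The identity `3×3` array. -/
def idm : M3 := fun i j => if i = j then 1 else 0

/-- Frobenius norm of a `3×3` array. -/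
def fnorm (A : M3) : ℝ := Real.sqrt (∑ i, ∑ j, (A i j) ^ 2)

/-- Symmetry of a `3×3` array. -/
def SymM (A : M3) : Prop := ∀ i j, A i j = A j i

/-- Positive definiteness of a `3×3` array. -/
def PosDefM (A : M3) : Prop := ∀ v : V3, v ≠ 0 → 0 < ∑ i, ∑ j, v i * A i j * v j

/-- The special orthogonal group `SO(3)`. -/
def SO3 : Set M3 := {R | mmul (transp R) R = idm ∧ (Matrix.of R).det = 1}

/-- Entries of the inverse of a `3×3` array. -/
def minv (A : M3) : M3 := fun i j => (Matrix.of A)⁻¹ i j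

/-- The columns `∂₁y₀, ∂₂y₀, b₀` of the matrix `Q₀`. -/
def Qcol (y0 b0 : E2 → V3) (x : E2) : Fin 3 → V3 := ![pdv 0 y0 x, pdv 1 y0 x, b0 x]

/-- The determinant of `Q₀`. -/
def Qdet (y0 b0 : E2 → V3) (x : E2) : ℝ := (Matrix.of fun a j => Qcol y0 b0 x j a).det

/-- Partial derivatives `∂₁, ∂₂, ∂₃` of an `x₃`-independent scalar field (so `∂₃ = 0`). -/
def pd3 (k : Fin 3) (f : E2 → ℝ) (x : E2) : ℝ :=
  if h : (k : ℕ) < 2 then pd2 ⟨(k : ℕ), h⟩ f x else 0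

/-- Christoffel symbols `Γ^n_{kl}` of the (`x₃`-independent) metric `G`. -/
def Gamma (G : E2 → M3) (n k l : Fin 3) (x : E2) : ℝ :=
  (1 / 2) * ∑ s, minv (G x) n s *
    (pd3 k (fun y => G y s l) x + pd3 l (fun y => G y s k) x - pd3 s (fun y => G y k l) x)

/-- Covariant Riemann curvatures `R_{iklm}` of the (`x₃`-independent) metric `G`;
indices are `0`-based, so e.g. `R_{1313} = Riem G 0 2 0 2`. -/
def Riem (G : E2 → M3) (i k l m : Fin 3) (x : E2) : ℝ :=
  (1 / 2) * (pd3 k (fun y => pd3 l (fun z => G z i m) y) x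
           + pd3 i (fun y => pd3 m (fun z => G z k l) y) x
           - pd3 k (fun y => pd3 m (fun z => G z i l) y) x
           - pd3 i (fun y => pd3 l (fun z => G z k m) y) x)
    + ∑ n, ∑ p, G x n p *
        (Gamma G n k l x * Gamma G p i m x - Gamma G n k m x * Gamma G p i l x)

/-- The deformation gradient `∇u = [∂₁u | ∂₂u | ∂₃u]` of `u : Ω^h → ℝ³`. -/
def gradu (u : E2 × ℝ → V3) (x : E2 × ℝ) : M3 :=
  fun a j => ![fderiv ℝ u x (Pi.single 0 1, 0),
               fderiv ℝ u x (Pi.single 1 1, 0),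
               fderiv ℝ u x (0, 1)] j a

/-- The elastic energy `E^h(u) = (1/h) ∫_{Ω × (-h/2,h/2)} W(∇u A⁻¹)`. -/
def Eh (W : M3 → ℝ≥0∞) (A : E2 → M3) (Ω : Set E2) (h : ℝ) (u : E2 × ℝ → V3) : ℝ≥0∞ :=
  (ENNReal.ofReal h)⁻¹ *
    ∫⁻ x in Ω ×ˢ Set.Ioo (-(h / 2)) (h / 2), W (mmul (gradu u x) (minv (A x.1)))

/-- Symmetric part of a `3×3` array. -/
def symM (A : M3) : M3 := fun i j => (A i j + A j i) / 2
/-- Symmetric part of a `2×2` array. -/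
def sym2M (A : M2) : M2 := fun i j => (A i j + A j i) / 2
/-- `F₂*`: the `3×3` array with principal `2×2` minor `F₂` and all other entries `0`. -/
def put (F2 : M2) : M3 :=
  fun i j => if h : (i : ℕ) < 2 ∧ (j : ℕ) < 2 then F2 ⟨i, h.1⟩ ⟨j, h.2⟩ else 0
/-- The tensor product `c ⊗ e₃`. -/
def tene3 (c : V3) : M3 := fun i j => if j = 2 then c i else 0
/-- Cross product in `ℝ³`. -/
def cross (u v : V3) : V3 :=
  ![u 1 * v 2 - u 2 * v 1, u 2 * v 0 - u 0 * v 2, u 0 * v 1 - u 1 * v 0]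
/-- The quadratic form `Q₃(F) = D²W(Id₃)(F,F)`, for a density `w`. -/
def Q3d (w : M3 → ℝ) (F : M3) : ℝ := fderiv ℝ (fun P => fderiv ℝ w P F) idm F
/-- The reduced quadratic form `Q_{2,A}(x', F₂)`:
the infimum of `Q₃(A⁻¹ F̃ A⁻¹)` over all `F̃` whose principal `2×2` minor is `F₂`. -/
def QA (w : M3 → ℝ) (A : E2 → M3) (x : E2) (F2 : M2) : ℝ :=
  ⨅ Ft : {Ft : M3 // ∀ i j : Fin 2, Ft i.castSucc j.castSucc = F2 i j},
    Q3d w (mmul (minv (A x)) (mmul Ft.1 (minv (A x))))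

/-- The partial derivatives of a Euclidean inner product obey the Leibniz rule. -/
lemma pd2_dot3 {u v : E2 → V3} {x : E2} (hu : DifferentiableAt ℝ u x)
    (hv : DifferentiableAt ℝ v x) (i : Fin 2) :
    pd2 i (fun y => dot3 (u y) (v y)) x =
      dot3 (pdv i u x) (v x) + dot3 (u x) (pdv i v x) := by
  have hu' := hasFDerivAt_pi'.1 hu.hasFDerivAt
  have hv' := hasFDerivAt_pi'.1 hv.hasFDerivAt
  have h := HasFDerivAt.fun_sum (u := Finset.univ) fun k _ => (hu' k).fun_mul (hv' k)
  simp only [pd2, dot3, pdv]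
  rw [h.fderiv]
  simp only [sum_apply, add_apply,
    smul_apply, ContinuousLinearMap.comp_apply,
    ContinuousLinearMap.proj_apply, smul_eq_mul, ← Finset.sum_add_distrib]
  exact Finset.sum_congr rfl fun k _ => by ring

lemma dot3_comm (u v : V3) : dot3 u v = dot3 v u :=
  Finset.sum_congr rfl fun _ _ => mul_comm _ _

/-- A vector is recovered from its inner products with a frame via the inverse Gram matrix. -/
lemma eq_sum_minv_gram_smul {Q : Fin 3 → V3} {g : M3}
    (hdet : (Matrix.of fun a j => Q j a).det ≠ 0)
    (hg : ∀ i j, dot3 (Q i) (Q j) = g i j) (p : V3) :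
    p = ∑ n, (∑ s, minv g n s * dot3 (Q s) p) • Q n := by
  set A : Matrix (Fin 3) (Fin 3) ℝ := Matrix.of fun a j => Q j a with hA
  have hgA : Matrix.of g = A.transpose * A := by
    ext i j
    simp [← hg, Matrix.mul_apply, dot3, hA]
  have hunit : IsUnit A.det := isUnit_iff_ne_zero.2 hdet
  have hunit' : IsUnit A.transpose.det := by rwa [Matrix.det_transpose]
  have hid : A.mulVec ((Matrix.of g)⁻¹.mulVec (A.transpose.mulVec p)) = p := by
    rw [hgA, Matrix.mul_inv_rev, Matrix.mulVec_mulVec, Matrix.mulVec_mulVec, ← Matrix.mul_assoc,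
      Matrix.mul_nonsing_inv _ hunit, Matrix.one_mul, Matrix.nonsing_inv_mul _ hunit',
      Matrix.one_mulVec]
  conv_lhs => rw [← hid]
  ext a
  simp only [Matrix.mulVec, dotProduct, Finset.sum_apply, Pi.smul_apply, smul_eq_mul, minv, dot3]
  exact Finset.sum_congr rfl fun _ _ => mul_comm _ _

/-- A symmetric array `P` of vectors that acts on a frame as the derivatives `∂ₖ Qₗ` of a frame
with Gram matrix `G` would is expanded in that frame by the Christoffel symbols of `G`. -/
lemma eq_sum_Gamma_smul {G : E2 → M3} {x : E2} {Q : Fin 3 → V3} {P : Fin 3 → Fin 3 → V3}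
    (hdet : (Matrix.of fun a j => Q j a).det ≠ 0)
    (hG : ∀ i j, dot3 (Q i) (Q j) = G x i j)
    (hP : ∀ k l, P k l = P l k)
    (hPQ : ∀ k s l, pd3 k (fun y => G y s l) x = dot3 (P k s) (Q l) + dot3 (Q s) (P k l))
    (k l : Fin 3) :
    P k l = Gamma G 0 k l x • Q 0 + Gamma G 1 k l x • Q 1 + Gamma G 2 k l x • Q 2 := by
  have hGamma : ∀ n, Gamma G n k l x = ∑ s, minv (G x) n s * dot3 (Q s) (P k l) := by
    intro n
    rw [Gamma, Finset.mul_sum]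
    refine Finset.sum_congr rfl fun s _ => ?_
    rw [hPQ k s l, hPQ l s k, hPQ s k l, hP l s, hP l k, hP k s, dot3_comm (P s l) (Q k),
      dot3_comm (P s k) (Q l), dot3_comm (Q l)]
    ring
  rw [← Fin.sum_univ_three fun n => Gamma G n k l x • Q n]
  simp only [hGamma]
  exact eq_sum_minv_gram_smul hdet hG (P k l)

/-- Partial derivatives of a smooth vector field are differentiable. -/
lemma differentiableAt_pdv {y : E2 → V3} {x : E2} (h : ContDiffAt ℝ 2 y x) (j : Fin 2) :
    DifferentiableAt ℝ (fun z => pdv j y z) x :=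
  ((h.fderiv_right (m := 1) (by norm_num)).differentiableAt one_ne_zero).clm_apply
    (differentiableAt_const _)

/-- Partial derivatives of a smooth vector field commute. -/
lemma pdv_pdv_comm {y : E2 → V3} {x : E2} (h : ContDiffAt ℝ 2 y x) (i j : Fin 2) :
    pdv i (fun z => pdv j y z) x = pdv j (fun z => pdv i y z) x := by
  have hd : DifferentiableAt ℝ (fderiv ℝ y) x :=
    (h.fderiv_right (m := 1) (by norm_num)).differentiableAt one_ne_zero
  have hs : IsSymmSndFDerivAt ℝ y x := h.isSymmSndFDerivAt (by simp)
  have key : ∀ a b : Fin 2, pdv a (fun z => pdv b y z) x =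
      fderiv ℝ (fderiv ℝ y) x (Pi.single a 1) (Pi.single b 1) := by
    intro a b
    simp only [pdv]
    rw [fderiv_clm_apply hd (differentiableAt_const _)]
    simp
  rw [key, key, hs.eq]

/-- The expansions of `∂ᵢ∂ⱼ y₀`, `∂ᵢ b₀` and `d₀` in the frame
`{∂₁y₀, ∂₂y₀, b₀}` have the Christoffel symbols of `G` as coefficients. -/
theorem stmt9
    (Ω : Set E2) (hΩo : IsOpen Ω) (hΩb : Bornology.IsBounded Ω)
    (hΩsc : SimplyConnectedSpace ↥Ω)
    (G : E2 → M3) (hGsm : ContDiffOn ℝ (⊤ : ℕ∞) G (closure Ω))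
    (hGsym : ∀ x ∈ closure Ω, SymM (G x)) (hGpos : ∀ x ∈ closure Ω, PosDefM (G x))
    (y0 : E2 → V3) (hy0sm : ContDiffOn ℝ (⊤ : ℕ∞) y0 (closure Ω))
    (himm : ∀ x ∈ Ω, ∀ i j : Fin 2,
      dot3 (pdv i y0 x) (pdv j y0 x) = G x i.castSucc j.castSucc)
    (b0 : E2 → V3) (hb0sm : ContDiffOn ℝ (⊤ : ℕ∞) b0 (closure Ω))
    (hQ0 : ∀ x ∈ Ω, ∀ i j : Fin 3,
      dot3 (Qcol y0 b0 x i) (Qcol y0 b0 x j) = G x i j)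
    (hQdet : ∀ x ∈ Ω, 0 < Qdet y0 b0 x)
    (hsym0 : ∀ x ∈ Ω, ∀ i j : Fin 2,
      dot3 (pdv i y0 x) (pdv j b0 x) + dot3 (pdv j y0 x) (pdv i b0 x) = 0)
    (d0 : E2 → V3) (hd0sm : ContDiffOn ℝ (⊤ : ℕ∞) d0 (closure Ω))
    (hd0 : ∀ x ∈ Ω,
      (∀ i : Fin 2, dot3 (Qcol y0 b0 x i.castSucc) (d0 x) = - dot3 (pdv i b0 x) (b0 x)) ∧
      dot3 (Qcol y0 b0 x 2) (d0 x) = 0)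
 :
    ∀ x ∈ Ω,
      (∀ i j : Fin 2,
        pdv i (fun y => pdv j y0 y) x =
          Gamma G 0 i.castSucc j.castSucc x • pdv 0 y0 x +
          Gamma G 1 i.castSucc j.castSucc x • pdv 1 y0 x +
          Gamma G 2 i.castSucc j.castSucc x • b0 x) ∧
      (∀ i : Fin 2,
        pdv i b0 x =
          Gamma G 0 i.castSucc 2 x • pdv 0 y0 x +
          Gamma G 1 i.castSucc 2 x • pdv 1 y0 x +
          Gamma G 2 i.castSucc 2 x • b0 x) ∧
      d0 x =
        Gamma G 0 2 2 x • pdv 0 y0 x +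
        Gamma G 1 2 2 x • pdv 1 y0 x +
        Gamma G 2 2 2 x • b0 x := by
  intro x hx
  have hnhds : closure Ω ∈ 𝓝 x := Filter.mem_of_superset (hΩo.mem_nhds hx) subset_closure
  have hy : ContDiffAt ℝ 2 y0 x := (hy0sm.contDiffAt hnhds).of_le (WithTop.coe_le_coe.2 (le_top (a := (2 : ℕ∞))))
  have hb : DifferentiableAt ℝ b0 x := (hb0sm.contDiffAt hnhds).differentiableAt (by simp)
  obtain ⟨hdi, hd3⟩ := hd0 x hx
  -- the formal derivatives of the frame, with `∂₃Qᵢ = ∂ᵢb₀` and `∂₃b₀ = d₀`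
  let P : Fin 3 → Fin 3 → V3 :=
    ![![pdv 0 (fun y => pdv 0 y0 y) x, pdv 0 (fun y => pdv 1 y0 y) x, pdv 0 b0 x],
      ![pdv 1 (fun y => pdv 0 y0 y) x, pdv 1 (fun y => pdv 1 y0 y) x, pdv 1 b0 x],
      ![pdv 0 b0 x, pdv 1 b0 x, d0 x]]
  have hQdiff : ∀ j : Fin 3, DifferentiableAt ℝ (fun y => Qcol y0 b0 y j) x := by
    intro j
    fin_cases j
    exacts [differentiableAt_pdv hy 0, differentiableAt_pdv hy 1, hb]
  have hPi : ∀ (i : Fin 2) (j : Fin 3),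
      pdv i (fun y => Qcol y0 b0 y j) x = P i.castSucc j := by
    intro i j
    fin_cases i <;> fin_cases j <;> rfl
  have hP : ∀ k l, P k l = P l k := by
    intro k l
    have h01 := pdv_pdv_comm hy 0 1
    fin_cases k <;> fin_cases l <;> first | rfl | exact h01 | exact h01.symm
  have hGi : ∀ (i : Fin 2) (s l : Fin 3), pd2 i (fun y => G y s l) x =
      dot3 (P i.castSucc s) (Qcol y0 b0 x l) + dot3 (Qcol y0 b0 x s) (P i.castSucc l) := by
    intro i s l
    have heq : (fun y => G y s l) =ᶠ[𝓝 x]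
        fun y => dot3 (Qcol y0 b0 y s) (Qcol y0 b0 y l) := by
      filter_upwards [hΩo.mem_nhds hx] with y hyΩ using (hQ0 y hyΩ s l).symm
    rw [← hPi, ← hPi, ← pd2_dot3 (hQdiff s) (hQdiff l), pd2, heq.fderiv_eq, pd2]
  have hG3 : ∀ s l : Fin 3,
      dot3 (P 2 s) (Qcol y0 b0 x l) + dot3 (Qcol y0 b0 x s) (P 2 l) = 0 := by
    have hij : ∀ i j : Fin 2, dot3 (pdv i b0 x) (pdv j y0 x) +
        dot3 (pdv i y0 x) (pdv j b0 x) = 0 := by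
      intro i j
      rw [dot3_comm, add_comm]
      exact hsym0 x hx i j
    have hi3 : ∀ i : Fin 2, dot3 (pdv i b0 x) (b0 x) +
        dot3 (Qcol y0 b0 x i.castSucc) (d0 x) = 0 := by
      intro i
      rw [hdi, add_neg_cancel]
    have h3i : ∀ i : Fin 2, dot3 (d0 x) (Qcol y0 b0 x i.castSucc) +
        dot3 (b0 x) (pdv i b0 x) = 0 := by
      intro i
      rw [dot3_comm, hdi, dot3_comm (b0 x), neg_add_cancel]
    have h33 : dot3 (d0 x) (Qcol y0 b0 x 2) + dot3 (Qcol y0 b0 x 2) (d0 x) = 0 := by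
      rw [dot3_comm, hd3, add_zero]
    intro s l
    fin_cases s <;> fin_cases l
    exacts [hij 0 0, hij 0 1, hi3 0, hij 1 0, hij 1 1, hi3 1, h3i 0, h3i 1, h33]
  have hPQ : ∀ k s l, pd3 k (fun y => G y s l) x =
      dot3 (P k s) (Qcol y0 b0 x l) + dot3 (Qcol y0 b0 x s) (P k l) := by
    intro k s l
    fin_cases k
    exacts [hGi 0 s l, hGi 1 s l, (hG3 s l).symm]
  have key := eq_sum_Gamma_smul (hQdet x hx).ne' (hQ0 x hx) hP hPQ
  refine ⟨fun i j => ?_, fun i => ?_, key 2 2⟩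
  · have h := key i.castSucc j.castSucc
    fin_cases i <;> fin_cases j <;> exact h
  · have h := key i.castSucc 2
    fin_cases i <;> exact h
end
end

section
/- Let λ : Ω̄ → ℝ be smooth and strictly positive, and let G = diag(1, 1, λ), regarded as a metric independent of x3. Then the Riemann curvatures of G satisfy R_{1212} ≡ R_{1213} ≡ R_{1223} ≡ 0 on Ω and [[R_{1313}, R_{1323}], [R_{1323}, R_{2323}]] = −½ M_λ, where M_λ = ∇²λ − (1/(2λ)) ∇λ ⊗ ∇λ. Consequently, all six independent curvature components of G vanish identically on Ω if and only if M_λ ≡ 0 on Ω. -/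
noncomputable section

open scoped Topology ENNReal
open Filter MeasureTheory

/-- The metric `diag(1, 1, λ)`. -/
def Gdiag (lam : E2 → ℝ) (x : E2) : M3 :=
  fun i j => if i = j then (if (i : ℕ) < 2 then 1 else lam x) else 0

theorem pd2_const (i : Fin 2) (c : ℝ) (x : E2) : pd2 i (fun _ => c) x = 0 := by
  simp [pd2]

theorem pd3_zero (f : E2 → ℝ) (x : E2) : pd3 0 f x = pd2 0 f x := by
  simp [pd3]

theorem pd3_one (f : E2 → ℝ) (x : E2) : pd3 1 f x = pd2 1 f x := by
  simp [pd3]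

theorem pd3_two (f : E2 → ℝ) (x : E2) : pd3 2 f x = 0 := by
  simp [pd3]

/-- Partial derivatives of a twice continuously differentiable function commute. -/
theorem pd2_comm {f : E2 → ℝ} {x : E2} (hf : ContDiffAt ℝ 2 f x) (i j : Fin 2) :
    pd2 i (fun y => pd2 j f y) x = pd2 j (fun y => pd2 i f y) x := by
  have hd : DifferentiableAt ℝ (fderiv ℝ f) x :=
    (hf.fderiv_right (m := 1) (by norm_num)).differentiableAt (by norm_num)
  have key (a b : Fin 2) : pd2 a (fun y => pd2 b f y) x =
      fderiv ℝ (fderiv ℝ f) x (Pi.single a 1) (Pi.single b 1) := by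
    simp only [pd2]
    rw [fderiv_clm_apply hd (differentiableAt_const _)]
    simp
  rw [key, key]
  exact (hf.isSymmSndFDerivAt (by simp)).eq _ _

theorem minv_Gdiag {lam : E2 → ℝ} {x : E2} (hx : lam x ≠ 0) (i j : Fin 3) :
    minv (Gdiag lam x) i j = if i = j then (if (i : ℕ) < 2 then 1 else (lam x)⁻¹) else 0 := by
  have h : (Matrix.of (Gdiag lam x))⁻¹ = Matrix.of (fun i j : Fin 3 =>
      if i = j then (if (i : ℕ) < 2 then 1 else (lam x)⁻¹) else 0) := by
    apply Matrix.inv_eq_right_inv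
    ext a b
    fin_cases a <;> fin_cases b <;> simp [Matrix.mul_apply, Gdiag, hx]
  rw [minv, h, Matrix.of_apply]

theorem Riem_Gdiag_tangential {lam : E2 → ℝ} {x : E2} (hx : lam x ≠ 0) :
    Riem (Gdiag lam) 0 1 0 1 x = 0 ∧ Riem (Gdiag lam) 0 1 0 2 x = 0 ∧
      Riem (Gdiag lam) 0 1 1 2 x = 0 := by
  refine ⟨?_, ?_, ?_⟩ <;>
    simp [Riem, Gamma, minv_Gdiag hx, Fin.sum_univ_three, Gdiag, pd3_zero, pd3_one, pd3_two,
      pd2_const]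

theorem Riem_Gdiag_normal {lam : E2 → ℝ} {x : E2} (hx : lam x ≠ 0) (i j : Fin 2) :
    Riem (Gdiag lam) i.castSucc 2 j.castSucc 2 x =
      -(1 / 2) * (pd2 i (fun y => pd2 j lam y) x -
        1 / (2 * lam x) * (pd2 i lam x * pd2 j lam x)) := by
  fin_cases i <;> fin_cases j <;>
    simp [Riem, Gamma, minv_Gdiag hx, Fin.sum_univ_three, Gdiag, pd3_zero, pd3_one, pd3_two,
      pd2_const] <;> field_simp <;> ring

/-- For `G = diag(1,1,λ)`: `R₁₂₁₂ ≡ R₁₂₁₃ ≡ R₁₂₂₃ ≡ 0` on `Ω`,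
`[[R₁₃₁₃, R₁₃₂₃], [R₁₃₂₃, R₂₃₂₃]] = -½ M_λ` with `M_λ = ∇²λ - (1/2λ) ∇λ ⊗ ∇λ`, and hence all
six independent curvatures of `G` vanish identically on `Ω` iff `M_λ ≡ 0` on `Ω`. -/
theorem stmt17
    (Ω : Set E2) (hΩo : IsOpen Ω) (hΩb : Bornology.IsBounded Ω)
    (hΩsc : SimplyConnectedSpace ↥Ω)
    (lam : E2 → ℝ) (hlamsm : ContDiffOn ℝ (⊤ : ℕ∞) lam (closure Ω))
    (hlampos : ∀ x ∈ closure Ω, 0 < lam x) :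
    (∀ x ∈ Ω,
      Riem (Gdiag lam) 0 1 0 1 x = 0 ∧
      Riem (Gdiag lam) 0 1 0 2 x = 0 ∧
      Riem (Gdiag lam) 0 1 1 2 x = 0 ∧
      (∀ i j : Fin 2,
        Riem (Gdiag lam) i.castSucc 2 j.castSucc 2 x =
          -(1 / 2) * (pd2 i (fun y => pd2 j lam y) x -
            1 / (2 * lam x) * (pd2 i lam x * pd2 j lam x)))) ∧
    ((∀ x ∈ Ω,
        Riem (Gdiag lam) 0 1 0 1 x = 0 ∧ Riem (Gdiag lam) 0 1 0 2 x = 0 ∧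
        Riem (Gdiag lam) 0 1 1 2 x = 0 ∧ Riem (Gdiag lam) 0 2 0 2 x = 0 ∧
        Riem (Gdiag lam) 0 2 1 2 x = 0 ∧ Riem (Gdiag lam) 1 2 1 2 x = 0) ↔
      (∀ x ∈ Ω, ∀ i j : Fin 2,
        pd2 i (fun y => pd2 j lam y) x -
          1 / (2 * lam x) * (pd2 i lam x * pd2 j lam x) = 0)) := by
  have hne (x : E2) (hx : x ∈ Ω) : lam x ≠ 0 := (hlampos x (subset_closure hx)).ne'
  refine ⟨fun x hx => ?_, fun h x hx i j => ?_, fun h x hx => ?_⟩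
  · obtain ⟨h₁, h₂, h₃⟩ := Riem_Gdiag_tangential (hne x hx)
    exact ⟨h₁, h₂, h₃, Riem_Gdiag_normal (hne x hx)⟩
  · obtain ⟨-, -, -, h00, h01, h11⟩ := h x hx
    have hsm : ContDiffAt ℝ 2 lam x :=
      ((hlamsm.mono subset_closure).contDiffAt (hΩo.mem_nhds hx)).of_le
        (WithTop.coe_le_coe.2 (le_top : (2 : ℕ∞) ≤ ⊤))
    have key (a b : Fin 2) (hab : Riem (Gdiag lam) a.castSucc 2 b.castSucc 2 x = 0) :
        pd2 a (fun y => pd2 b lam y) x -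
          1 / (2 * lam x) * (pd2 a lam x * pd2 b lam x) = 0 := by
      rw [Riem_Gdiag_normal (hne x hx)] at hab
      linarith
    fin_cases i <;> fin_cases j
    · exact key 0 0 h00
    · exact key 0 1 h01
    · have h10 := key 0 1 h01
      rw [pd2_comm hsm, mul_comm (pd2 0 lam x)] at h10
      exact h10
    · exact key 1 1 h11
  · obtain ⟨h₁, h₂, h₃⟩ := Riem_Gdiag_tangential (hne x hx)
    have key (a b : Fin 2) : Riem (Gdiag lam) a.castSucc 2 b.castSucc 2 x = 0 := by
      rw [Riem_Gdiag_normal (hne x hx), h x hx a b, mul_zero]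
    exact ⟨h₁, h₂, h₃, key 0 0, key 0 1, key 1 1⟩
end
end
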